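/- arXiv:2510.01522 — 6 statements merged into one kernel-verified Lean document; each statement's English description precedes it below -/
import Mathlib

section
/- Let m ∈ ℕ with m ≥ 2 and let ε ∈ (0, 1/2). For any z ∈ ℂ_1^n with ℓ_1(z, z*) ≤ ε², any V ∈ 𝒱_m with ℓ_m(V, z*) ≤ ε², and any real t > 0, one has ℓ_m(F_m(V), F_1(z)) ≤ (4n²/t²)·(6ε + σ‖W‖/n)²·ℓ_m(V, z) + (4/n)·Σ_{j=1}^n 1{|[Yz]_j| < t}. -/
open scoped Classical
open Matrix

noncomputable section

namespace PhaseSync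

/-- Euclidean norm of a complex vector. -/
def enorm {k : ℕ} (v : Fin k → ℂ) : ℝ := Real.sqrt (∑ i, ‖v i‖ ^ 2)

/-- Frobenius norm of a complex matrix. -/
def fnorm {k l : ℕ} (A : Matrix (Fin k) (Fin l) ℂ) : ℝ :=
  Real.sqrt (∑ i, ∑ j, ‖A i j‖ ^ 2)

/-- L2 operator norm of a square complex matrix. -/
def opNorm {k : ℕ} (A : Matrix (Fin k) (Fin k) ℂ) : ℝ :=
  ‖Matrix.toEuclideanCLM (𝕜 := ℂ) (n := Fin k) A‖

/-- Indicator function of a proposition. -/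
def ind (P : Prop) : ℝ := if P then 1 else 0

/-- The loss ℓ_m(V, z) = min_{a : ‖a‖=1} ‖V - a zᴴ‖_F² / n. -/
def lossM {k l : ℕ} (V : Matrix (Fin k) (Fin l) ℂ) (z : Fin l → ℂ) : ℝ :=
  sInf { r : ℝ | ∃ a : Fin k → ℂ, enorm a = 1 ∧
    r = fnorm (V - Matrix.vecMulVec a (star z)) ^ 2 / l }

/-- The loss ℓ_1(z', z) = min_{|a|=1} ‖z' - a z‖² / n. -/
def loss1 {l : ℕ} (z' z : Fin l → ℂ) : ℝ :=
  sInf { r : ℝ | ∃ a : ℂ, ‖a‖ = 1 ∧ r = enorm (z' - a • z) ^ 2 / l }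

/-- The mapping F₁: entrywise normalization of Y z. -/
def F1 {l : ℕ} (Y : Matrix (Fin l) (Fin l) ℂ) (z : Fin l → ℂ) : Fin l → ℂ :=
  fun j => if Y.mulVec z j ≠ 0 then Y.mulVec z j / (‖Y.mulVec z j‖ : ℂ) else z j

/-- jth column of a matrix. -/
def col {k l : ℕ} (A : Matrix (Fin k) (Fin l) ℂ) (j : Fin l) : Fin k → ℂ := fun i => A i j

/-- The mapping F_m: columnwise normalization of V Yᴴ. -/
def Fm {k l : ℕ} (Y : Matrix (Fin l) (Fin l) ℂ) (V : Matrix (Fin k) (Fin l) ℂ) :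
    Matrix (Fin k) (Fin l) ℂ :=
  Matrix.of fun i j =>
    if col (V * Yᴴ) j ≠ 0 then (V * Yᴴ) i j / ((enorm (col (V * Yᴴ) j) : ℝ) : ℂ) else V i j

/-- g_t(x) = x / max(|x|, t). -/
def gfun (t : ℝ) (x : ℂ) : ℂ := x / ((max ‖x‖ t : ℝ) : ℂ)

/-- The mapping G(z, s, t), coordinatewise g_t(z*_j s + σ [W z]_j). -/
def G {l : ℕ} (zstar : Fin l → ℂ) (σ : ℝ) (W : Matrix (Fin l) (Fin l) ℂ)
    (z : Fin l → ℂ) (s : ℂ) (t : ℝ) : Fin l → ℂ :=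
  fun j => gfun t (zstar j * s + (σ : ℂ) * W.mulVec z j)

/-- The mapping F₁'(z, s), entrywise normalization of z* s + σ W z. -/
def F1' {l : ℕ} (zstar : Fin l → ℂ) (σ : ℝ) (W : Matrix (Fin l) (Fin l) ℂ)
    (z : Fin l → ℂ) (s : ℂ) : Fin l → ℂ :=
  fun j =>
    if zstar j * s + (σ : ℂ) * W.mulVec z j ≠ 0 then
      (zstar j * s + (σ : ℂ) * W.mulVec z j) /
        ((‖zstar j * s + (σ : ℂ) * W.mulVec z j‖ : ℝ) : ℂ)
    else z j

/-- W with jth row and column zeroed out. -/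
def Wminus {l : ℕ} (W : Matrix (Fin l) (Fin l) ℂ) (j : Fin l) : Matrix (Fin l) (Fin l) ℂ :=
  Matrix.of fun k i => if k = j ∨ i = j then 0 else W k i

lemma enorm_eq {k : ℕ} (v : Fin k → ℂ) : enorm v = ‖(WithLp.toLp 2 v : EuclideanSpace ℂ (Fin k))‖ := by
  rw [EuclideanSpace.norm_eq]; rfl

lemma fnorm_eq {k l : ℕ} (A : Matrix (Fin k) (Fin l) ℂ) :
    fnorm A = ‖(WithLp.toLp 2 (fun p : Fin k × Fin l => A p.1 p.2) :
      EuclideanSpace ℂ (Fin k × Fin l))‖ := by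
  rw [EuclideanSpace.norm_eq, Fintype.sum_prod_type]; rfl

lemma enorm_nonneg {k : ℕ} (v : Fin k → ℂ) : 0 ≤ enorm v := Real.sqrt_nonneg _

lemma fnorm_nonneg {k l : ℕ} (A : Matrix (Fin k) (Fin l) ℂ) : 0 ≤ fnorm A := Real.sqrt_nonneg _

lemma enorm_sq {k : ℕ} (v : Fin k → ℂ) : enorm v ^ 2 = ∑ i, ‖v i‖ ^ 2 :=
  Real.sq_sqrt (by positivity)

lemma fnorm_sq {k l : ℕ} (A : Matrix (Fin k) (Fin l) ℂ) :
    fnorm A ^ 2 = ∑ i, ∑ j, ‖A i j‖ ^ 2 := Real.sq_sqrt (by positivity)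

lemma fnorm_sq_row {k l : ℕ} (A : Matrix (Fin k) (Fin l) ℂ) :
    fnorm A ^ 2 = ∑ i, enorm (A i) ^ 2 := by
  simp only [fnorm_sq, enorm_sq]

lemma fnorm_sq_col {k l : ℕ} (A : Matrix (Fin k) (Fin l) ℂ) :
    fnorm A ^ 2 = ∑ j, enorm (col A j) ^ 2 := by
  simp only [fnorm_sq, enorm_sq, col]; exact Finset.sum_comm

lemma enorm_add_le {k : ℕ} (v w : Fin k → ℂ) : enorm (v + w) ≤ enorm v + enorm w := by
  simp only [enorm_eq, WithLp.toLp_add]; exact norm_add_le _ _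

lemma enorm_smul {k : ℕ} (c : ℂ) (v : Fin k → ℂ) : enorm (c • v) = ‖c‖ * enorm v := by
  simp only [enorm_eq, WithLp.toLp_smul]; exact norm_smul _ _

lemma enorm_star {k : ℕ} (v : Fin k → ℂ) : enorm (star v) = enorm v := by
  simp [enorm]

lemma fnorm_add_le {k l : ℕ} (A B : Matrix (Fin k) (Fin l) ℂ) :
    fnorm (A + B) ≤ fnorm A + fnorm B := by
  simp only [fnorm_eq]
  exact norm_add_le (WithLp.toLp 2 (fun p : Fin k × Fin l => A p.1 p.2) :
      EuclideanSpace ℂ (Fin k × Fin l)) (WithLp.toLp 2 (fun p : Fin k × Fin l => B p.1 p.2))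

lemma fnorm_smul {k l : ℕ} (c : ℂ) (A : Matrix (Fin k) (Fin l) ℂ) :
    fnorm (c • A) = ‖c‖ * fnorm A := by
  simp only [fnorm_eq]
  exact norm_smul c (WithLp.toLp 2 (fun p : Fin k × Fin l => A p.1 p.2) :
      EuclideanSpace ℂ (Fin k × Fin l))

lemma fnorm_vecMulVec {k l : ℕ} (a : Fin k → ℂ) (b : Fin l → ℂ) :
    fnorm (vecMulVec a b) = enorm a * enorm b := by
  have h : fnorm (vecMulVec a b) ^ 2 = (enorm a * enorm b) ^ 2 := by
    rw [fnorm_sq, mul_pow, enorm_sq, enorm_sq, Finset.sum_mul_sum]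
    simp [vecMulVec_apply, mul_pow]
  exact (pow_left_inj₀ (fnorm_nonneg _) (mul_nonneg (enorm_nonneg _) (enorm_nonneg _))
    two_ne_zero).1 h

lemma norm_dot_le {k : ℕ} (v w : Fin k → ℂ) : ‖∑ i, v i * w i‖ ≤ enorm v * enorm w := by
  have h := norm_inner_le_norm (𝕜 := ℂ) (WithLp.toLp 2 (star v) : EuclideanSpace ℂ (Fin k))
    (WithLp.toLp 2 w)
  rw [← enorm_eq, ← enorm_eq, enorm_star] at h
  simpa [PiLp.inner_apply, mul_comm] using h

lemma enorm_mulVec_le {k l : ℕ} (A : Matrix (Fin k) (Fin l) ℂ) (v : Fin l → ℂ) :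
    enorm (A *ᵥ v) ≤ fnorm A * enorm v := by
  apply le_of_sq_le_sq _ (mul_nonneg (fnorm_nonneg _) (enorm_nonneg _))
  rw [mul_pow, fnorm_sq_row, enorm_sq, Finset.sum_mul]
  apply Finset.sum_le_sum
  intro i _
  rw [← mul_pow]
  exact pow_le_pow_left₀ (norm_nonneg _) (norm_dot_le _ _) 2

lemma enorm_op {k : ℕ} (W : Matrix (Fin k) (Fin k) ℂ) (v : Fin k → ℂ) :
    enorm (W *ᵥ v) ≤ opNorm W * enorm v := by
  rw [enorm_eq, enorm_eq]
  exact (Matrix.toEuclideanCLM (𝕜 := ℂ) (n := Fin k) W).le_opNorm (WithLp.toLp 2 v)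

lemma fnorm_mul_op {k l : ℕ} (D : Matrix (Fin k) (Fin l) ℂ) (W : Matrix (Fin l) (Fin l) ℂ) :
    fnorm (D * Wᴴ) ≤ opNorm W * fnorm D := by
  have h0 : 0 ≤ opNorm W := norm_nonneg _
  apply le_of_sq_le_sq _ (mul_nonneg h0 (fnorm_nonneg _))
  rw [mul_pow, fnorm_sq_row, fnorm_sq_row, Finset.mul_sum]
  apply Finset.sum_le_sum
  intro i _
  have : (D * Wᴴ) i = star (W *ᵥ star (D i)) := by
    ext j
    simp [Matrix.mul_apply, mulVec, dotProduct, mul_comm]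
  rw [this, enorm_star, ← mul_pow]
  refine pow_le_pow_left₀ (enorm_nonneg _) ?_ 2
  have := enorm_op W (star (D i))
  rwa [enorm_star] at this

lemma fnorm_sub_sq {k l : ℕ} (V : Matrix (Fin k) (Fin l) ℂ) (a : Fin k → ℂ) (z : Fin l → ℂ)
    (ha : enorm a = 1) (hz : ∀ j, ‖z j‖ = 1) :
    fnorm (V - vecMulVec a (star z)) ^ 2 =
      fnorm V ^ 2 + l - 2 * (∑ i, (star a) i * (V *ᵥ z) i).re := by
  have h1 : (l : ℝ) = fnorm (vecMulVec a (star z)) ^ 2 := by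
    rw [fnorm_vecMulVec, ha, enorm_star, one_mul, enorm_sq]; simp [hz]
  rw [h1, fnorm_sq, fnorm_sq, fnorm_sq, Complex.re_sum, Finset.mul_sum, ← Finset.sum_add_distrib,
    ← Finset.sum_sub_distrib]
  apply Finset.sum_congr rfl
  intro i _
  simp only [mulVec, dotProduct]
  rw [Finset.mul_sum, Complex.re_sum, Finset.mul_sum, ← Finset.sum_add_distrib,
    ← Finset.sum_sub_distrib]
  apply Finset.sum_congr rfl
  intro j _
  simp only [Matrix.sub_apply, vecMulVec_apply, Pi.star_apply, RCLike.star_def, ← Complex.normSq_eq_norm_sq]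
  rw [Complex.normSq_sub]
  simp only [map_mul, Complex.conj_conj]
  ring_nf

lemma lossM_bdd {k l : ℕ} (V : Matrix (Fin k) (Fin l) ℂ) (z : Fin l → ℂ) :
    BddBelow { r : ℝ | ∃ a : Fin k → ℂ, enorm a = 1 ∧
    r = fnorm (V - Matrix.vecMulVec a (star z)) ^ 2 / l } := by
  refine ⟨0, ?_⟩
  rintro r ⟨a, _, rfl⟩
  positivity

lemma exists_min {k l : ℕ} (hk : 1 ≤ k) (V : Matrix (Fin k) (Fin l) ℂ) (z : Fin l → ℂ)
    (hz : ∀ j, ‖z j‖ = 1) :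
    ∃ a : Fin k → ℂ, enorm a = 1 ∧ V *ᵥ z = ((enorm (V *ᵥ z) : ℝ) : ℂ) • a ∧
      lossM V z = fnorm (V - vecMulVec a (star z)) ^ 2 / l := by
  have hex : ∃ a : Fin k → ℂ, enorm a = 1 ∧ V *ᵥ z = ((enorm (V *ᵥ z) : ℝ) : ℂ) • a := by
    by_cases h : enorm (V *ᵥ z) = 0
    · refine ⟨Pi.single ⟨0, hk⟩ 1, ?_, ?_⟩
      · rw [enorm_eq]; simp
      · rw [h]
        rw [enorm_eq, norm_eq_zero] at h
        have := congrArg WithLp.ofLp h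
        simpa using this
    · refine ⟨((enorm (V *ᵥ z) : ℝ) : ℂ)⁻¹ • (V *ᵥ z), ?_, ?_⟩
      · rw [enorm_smul, norm_inv, Complex.norm_real, Real.norm_of_nonneg (enorm_nonneg _)]
        exact inv_mul_cancel₀ h
      · rw [smul_smul, mul_inv_cancel₀ (by exact_mod_cast h), one_smul]
  obtain ⟨a, ha, hV⟩ := hex
  refine ⟨a, ha, hV, ?_⟩
  apply IsLeast.csInf_eq
  refine ⟨⟨a, ha, rfl⟩, ?_⟩
  rintro r ⟨b, hb, rfl⟩
  apply div_le_div_of_nonneg_right _ (Nat.cast_nonneg l)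
  rw [fnorm_sub_sq V a z ha hz, fnorm_sub_sq V b z hb hz]
  have h1 : (∑ i, (star b) i * (V *ᵥ z) i).re ≤ enorm (V *ᵥ z) := by
    refine (Complex.re_le_norm _).trans ((norm_dot_le _ _).trans ?_)
    rw [enorm_star, hb, one_mul]
  have h2 : (∑ i, (star a) i * (V *ᵥ z) i).re = enorm (V *ᵥ z) := by
    have : ∑ i, (star a) i * (V *ᵥ z) i = ((enorm (V *ᵥ z) : ℝ) : ℂ) := by
      have h3 : ∀ i, (star a) i * (V *ᵥ z) i = ((enorm (V *ᵥ z) : ℝ) : ℂ) * ((‖a i‖ ^ 2 : ℝ) : ℂ) := by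
        intro i
        conv_lhs => rw [hV]
        simp only [Pi.star_apply, Pi.smul_apply, smul_eq_mul, RCLike.star_def]
        rw [mul_left_comm, Complex.conj_mul']
        push_cast; ring
      rw [Finset.sum_congr rfl fun i _ => h3 i, ← Finset.mul_sum, ← Complex.ofReal_sum, ← enorm_sq, ha]
      simp
    rw [this, Complex.ofReal_re]
  linarith

lemma loss1_min {l : ℕ} (z' z : Fin l → ℂ) :
    ∃ b : ℂ, ‖b‖ = 1 ∧ loss1 z' z = enorm (z' - b • z) ^ 2 / l := by
  have hc : Continuous fun b : ℂ => enorm (z' - b • z) ^ 2 / l := by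
    simp only [enorm_sq]
    fun_prop
  obtain ⟨b, hb, hmin⟩ := (isCompact_sphere (0 : ℂ) 1).exists_isMinOn ⟨1, by simp⟩ hc.continuousOn
  have hb1 : ‖b‖ = 1 := by simpa using hb
  refine ⟨b, hb1, ?_⟩
  apply IsLeast.csInf_eq
  refine ⟨⟨b, hb1, rfl⟩, ?_⟩
  rintro r ⟨c, hc, rfl⟩
  exact hmin (show c ∈ Metric.sphere (0 : ℂ) 1 by simpa using hc)

lemma normalize_diff {k : ℕ} (x y u v : Fin k → ℂ) (hu : enorm u = 1)
    (hx : x = ((enorm x : ℝ) : ℂ) • u) (hy : y = ((enorm y : ℝ) : ℂ) • v) :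
    enorm (u - v) * enorm y ≤ 2 * enorm (x - y) := by
  have h1 : ((enorm y : ℝ) : ℂ) • (u - v) = ((enorm y - enorm x : ℝ) : ℂ) • u + (x - y) := by
    have key : ∀ p q : ℝ, x = (p : ℂ) • u → y = (q : ℂ) • v →
        (q : ℂ) • (u - v) = ((q - p : ℝ) : ℂ) • u + (x - y) := by
      rintro p q rfl rfl
      push_cast
      module
    exact key _ _ hx hy
  have h2 : |enorm y - enorm x| ≤ enorm (x - y) := by
    rw [enorm_eq, enorm_eq, enorm_eq, abs_sub_comm, WithLp.toLp_sub]
    exact abs_norm_sub_norm_le _ _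
  have h3 := congrArg enorm h1
  rw [enorm_smul, Complex.norm_real, Real.norm_of_nonneg (enorm_nonneg _)] at h3
  have h4 := enorm_add_le (((enorm y - enorm x : ℝ) : ℂ) • u) (x - y)
  rw [enorm_smul, Complex.norm_real, Real.norm_eq_abs, hu, mul_one] at h4
  linarith

set_option maxHeartbeats 1000000

theorem stmt0 {n m : ℕ} (hn : 1 ≤ n) (hm : 2 ≤ m)
    (zstar : Fin n → ℂ) (hzstar : ∀ j, ‖zstar j‖ = 1)
    (σ : ℝ) (hσ : 0 < σ) (W : Matrix (Fin n) (Fin n) ℂ) (hW : W.IsHermitian)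
    (Y : Matrix (Fin n) (Fin n) ℂ)
    (hY : Y = Matrix.vecMulVec zstar (star zstar) + (σ : ℂ) • W)
    (ε : ℝ) (hε : 0 < ε ∧ ε < 1 / 2)
    (z : Fin n → ℂ) (hz1 : ∀ j, ‖z j‖ = 1) (hz2 : loss1 z zstar ≤ ε ^ 2)
    (V : Matrix (Fin m) (Fin n) ℂ) (hV1 : ∀ j, enorm (col V j) = 1)
    (hV2 : lossM V zstar ≤ ε ^ 2)
    (t : ℝ) (ht : 0 < t) :
    lossM (Fm Y V) (F1 Y z) ≤
      (4 * (n : ℝ) ^ 2 / t ^ 2) * (6 * ε + σ * opNorm W / n) ^ 2 * lossM V z +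
        (4 / (n : ℝ)) * ∑ j : Fin n, ind (‖Y.mulVec z j‖ < t) := by
  obtain ⟨hε0, hε1⟩ := hε
  have hn0 : (0 : ℝ) < n := by exact_mod_cast hn
  obtain ⟨a, ha, haV, hal⟩ := exists_min (by omega) V z hz1
  obtain ⟨a0, ha0, -, ha0l⟩ := exists_min (by omega) V zstar hzstar
  obtain ⟨b, hb, hbl⟩ := loss1_min z zstar
  have hbb : b * star b = 1 := by
    rw [RCLike.star_def, Complex.mul_conj']; simp [hb]
  have es : ∀ w : Fin n → ℂ, (∀ j, ‖w j‖ = 1) → enorm w = √n := by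
    intro w hw; simp [enorm, hw]
  have hsn : √(n : ℝ) * √n = n := Real.mul_self_sqrt hn0.le
  have hsn0 : 0 < √(n : ℝ) := Real.sqrt_pos.2 hn0
  -- basic bounds
  have hB1 : enorm (z - b • zstar) ≤ ε * √n := by
    apply le_of_sq_le_sq _ (by positivity)
    rw [hbl, div_le_iff₀ hn0] at hz2
    rw [mul_pow, Real.sq_sqrt hn0.le]; exact hz2
  have hB2 : fnorm (V - vecMulVec a0 (star zstar)) ≤ ε * √n := by
    apply le_of_sq_le_sq _ (by positivity)
    rw [ha0l, div_le_iff₀ hn0] at hV2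
    rw [mul_pow, Real.sq_sqrt hn0.le]; exact hV2
  have hB1' : enorm (zstar - star b • z) ≤ ε * √n := by
    have : zstar - star b • z = (-star b) • (z - b • zstar) := by
      rw [smul_sub, smul_smul, neg_mul, mul_comm (star b), hbb]
      module
    rw [this, enorm_smul, norm_neg, norm_star, hb, one_mul]; exact hB1
  set D := V - vecMulVec a (star z) with hD
  set s := fnorm D with hs
  have hs0 : 0 ≤ s := fnorm_nonneg _
  -- triangle
  have hsle : s ≤ 2 * ε * √n := by
    have hle : lossM V z ≤ fnorm (V - vecMulVec (b • a0) (star z)) ^ 2 / n :=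
      csInf_le (lossM_bdd V z) ⟨b • a0, by rw [enorm_smul, hb, ha0, one_mul], rfl⟩
    rw [hal] at hle
    have h1 : s ≤ fnorm (V - vecMulVec (b • a0) (star z)) :=
      le_of_sq_le_sq ((div_le_div_iff_of_pos_right hn0).1 hle) (fnorm_nonneg _)
    have h2 : V - vecMulVec (b • a0) (star z) =
        (V - vecMulVec a0 (star zstar)) + vecMulVec a0 (star (zstar - star b • z)) := by
      ext i j
      simp [vecMulVec_apply]; ring
    rw [h2] at h1
    have h3 := fnorm_add_le (V - vecMulVec a0 (star zstar)) (vecMulVec a0 (star (zstar - star b • z)))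
    rw [fnorm_vecMulVec, ha0, enorm_star, one_mul] at h3
    linarith
  have hfV : fnorm V ^ 2 = n := by
    rw [fnorm_sq_col]; simp [hV1]
  -- D z
  have hDz : enorm (D *ᵥ z) = s ^ 2 / 2 := by
    have hmv : D *ᵥ z = ((enorm (V *ᵥ z) - n : ℝ) : ℂ) • a := by
      have h1 : vecMulVec a (star z) *ᵥ z = (n : ℂ) • a := by
        have : star z ⬝ᵥ z = n := by
          simp [dotProduct, Complex.conj_mul', hz1]
        rw [vecMulVec_mulVec, this]; ext i; simp [mul_comm]
      rw [hD, sub_mulVec, h1]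
      conv_lhs => rw [haV]
      push_cast
      module
    have h2 : s ^ 2 = 2 * n - 2 * enorm (V *ᵥ z) := by
      have hin : ∑ i, (star a) i * (V *ᵥ z) i = ((enorm (V *ᵥ z) : ℝ) : ℂ) := by
        have h3 : ∀ i, (star a) i * (V *ᵥ z) i =
            ((enorm (V *ᵥ z) : ℝ) : ℂ) * ((‖a i‖ ^ 2 : ℝ) : ℂ) := by
          intro i
          conv_lhs => rw [haV]
          simp only [Pi.star_apply, Pi.smul_apply, smul_eq_mul, RCLike.star_def]
          rw [mul_left_comm, Complex.conj_mul']
          push_cast; ring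
        rw [Finset.sum_congr rfl fun i _ => h3 i, ← Finset.mul_sum, ← Complex.ofReal_sum,
          ← enorm_sq, ha]
        simp
      rw [hs, hD, fnorm_sub_sq V a z ha hz1, hin, hfV, Complex.ofReal_re]; ring
    rw [hmv, enorm_smul, Complex.norm_real, ha, mul_one, Real.norm_eq_abs]
    rw [abs_of_nonpos (by nlinarith)]
    linarith
  have hDzs : enorm (D *ᵥ zstar) ≤ 2 * ε * √n * s := by
    have h1 : D *ᵥ zstar = D *ᵥ (zstar - star b • z) + star b • (D *ᵥ z) := by
      rw [← mulVec_smul, ← mulVec_add, sub_add_cancel]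
    have h2 := enorm_add_le (D *ᵥ (zstar - star b • z)) (star b • (D *ᵥ z))
    rw [← h1, enorm_smul, norm_star, hb, one_mul, hDz] at h2
    have h3 := enorm_mulVec_le D (zstar - star b • z)
    have h4 := mul_le_mul_of_nonneg_left hB1' hs0
    nlinarith
  have hop : 0 ≤ opNorm W := norm_nonneg _
  set E := D * Yᴴ with hE
  have hEn : fnorm E ≤ n * (6 * ε + σ * opNorm W / n) * s := by
    have h1 : E = vecMulVec (D *ᵥ zstar) (star zstar) + (σ : ℂ) • (D * Wᴴ) := by
      rw [hE, hY, conjTranspose_add, conjTranspose_smul, conjTranspose_vecMulVec, star_star,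
        Matrix.mul_add, mul_vecMulVec, Matrix.mul_smul]
      simp
    have h2 := fnorm_add_le (vecMulVec (D *ᵥ zstar) (star zstar)) ((σ : ℂ) • (D * Wᴴ))
    rw [← h1, fnorm_vecMulVec, fnorm_smul, Complex.norm_real, Real.norm_of_nonneg hσ.le,
      enorm_star, es zstar hzstar] at h2
    have h3 := mul_le_mul_of_nonneg_left (fnorm_mul_op D W) hσ.le
    have h4 := mul_le_mul_of_nonneg_right hDzs hsn0.le
    have h5 : (n : ℝ) * (6 * ε + σ * opNorm W / n) * s = 6 * ε * n * s + σ * (opNorm W * s) := by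
      field_simp
    have h6 : 2 * ε * √n * s * √n = 2 * ε * n * s := by
      linear_combination 2 * ε * s * hsn
    have h7 : 0 ≤ ε * n * s := by positivity
    linarith
  -- columns
  have hcol : ∀ j, enorm (col (Fm Y V - vecMulVec a (star (F1 Y z))) j) ^ 2 ≤
      4 / t ^ 2 * enorm (col E j) ^ 2 + 4 * ind (‖Y.mulVec z j‖ < t) := by
    intro j
    have hu : enorm (col (Fm Y V) j) = 1 ∧
        col (V * Yᴴ) j = ((enorm (col (V * Yᴴ) j) : ℝ) : ℂ) • col (Fm Y V) j := by
      by_cases h : col (V * Yᴴ) j = 0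
      · have h1 : col (Fm Y V) j = col V j := by
          ext i; simp [Fm, col] at h ⊢; simp [h]
        rw [h1, h]
        exact ⟨hV1 j, by simp [enorm]⟩
      · have h1 : col (Fm Y V) j = ((enorm (col (V * Yᴴ) j) : ℝ) : ℂ)⁻¹ • col (V * Yᴴ) j := by
          ext i
          simp only [Fm, col, Matrix.of_apply, Pi.smul_apply, smul_eq_mul] at h ⊢
          rw [if_pos h]; ring
        have h2 : enorm (col (V * Yᴴ) j) ≠ 0 := by
          intro h3
          rw [enorm_eq, norm_eq_zero] at h3
          exact h (by simpa using congrArg WithLp.ofLp h3)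
        rw [h1]
        constructor
        · rw [enorm_smul, norm_inv, Complex.norm_real, Real.norm_of_nonneg (enorm_nonneg _)]
          exact inv_mul_cancel₀ h2
        · rw [smul_smul, mul_inv_cancel₀ (by exact_mod_cast h2), one_smul]
    have hf : ‖F1 Y z j‖ = 1 ∧ (Y *ᵥ z) j = (‖(Y *ᵥ z) j‖ : ℂ) * F1 Y z j := by
      by_cases h : (Y *ᵥ z) j = 0
      · simp [F1, h, hz1]
      · simp only [F1, ne_eq, h, not_false_eq_true, if_true]
        have h' : (‖(Y *ᵥ z) j‖ : ℂ) ≠ 0 := by simpa using h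
        constructor
        · rw [norm_div, Complex.norm_real, norm_norm, div_self (by simpa using h)]
        · field_simp
    obtain ⟨hu1, hu2⟩ := hu
    obtain ⟨hf1, hf2⟩ := hf
    have hc : col (Fm Y V - vecMulVec a (star (F1 Y z))) j =
        col (Fm Y V) j - star (F1 Y z j) • a := by
      ext i; simp [col, vecMulVec_apply, mul_comm]
    have hv1 : enorm (star (F1 Y z j) • a) = 1 := by
      rw [enorm_smul, norm_star, hf1, ha, one_mul]
    have hy1 : enorm (star ((Y *ᵥ z) j) • a) = ‖(Y *ᵥ z) j‖ := by
      rw [enorm_smul, norm_star, ha, mul_one]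
    have hxy : col (V * Yᴴ) j - star ((Y *ᵥ z) j) • a = col E j := by
      have h1 : E = V * Yᴴ - vecMulVec a (star (Y *ᵥ z)) := by
        rw [hE, hD, Matrix.sub_mul, vecMulVec_mul, star_mulVec]
      rw [h1]; ext i; simp [col, vecMulVec_apply, mul_comm]
    rw [hc]
    have hE0 := enorm_nonneg (col E j)
    have hd0 := enorm_nonneg (col (Fm Y V) j - star (F1 Y z j) • a)
    by_cases hlt : ‖(Y *ᵥ z) j‖ < t
    · rw [ind, if_pos hlt]
      have h1 : enorm (col (Fm Y V) j - star (F1 Y z j) • a) ≤ 2 := by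
        have := enorm_add_le (col (Fm Y V) j) ((-1 : ℂ) • (star (F1 Y z j) • a))
        rw [enorm_smul, hu1, hv1, norm_neg, norm_one, neg_one_smul, ← sub_eq_add_neg] at this
        linarith
      have h2 : 0 ≤ 4 / t ^ 2 * enorm (col E j) ^ 2 := by positivity
      nlinarith
    · rw [ind, if_neg hlt]
      have h1 := normalize_diff (col (V * Yᴴ) j) (star ((Y *ᵥ z) j) • a) (col (Fm Y V) j)
        (star (F1 Y z j) • a) hu1 hu2 (by
          rw [hy1, smul_smul]
          congr 1
          conv_lhs => rw [hf2]
          simp)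
      rw [hy1, hxy] at h1
      have h2 : enorm (col (Fm Y V) j - star (F1 Y z j) • a) * t ≤ 2 * enorm (col E j) :=
        (mul_le_mul_of_nonneg_left (not_lt.1 hlt) hd0).trans h1
      have h3 := pow_le_pow_left₀ (by positivity) h2 2
      rw [mul_zero, add_zero, div_mul_eq_mul_div, le_div_iff₀ (by positivity)]
      rw [mul_pow, mul_pow] at h3
      linarith
  -- conclusion
  have hfin : lossM (Fm Y V) (F1 Y z) ≤ fnorm (Fm Y V - vecMulVec a (star (F1 Y z))) ^ 2 / n :=
    csInf_le (lossM_bdd _ _) ⟨a, ha, rfl⟩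
  refine hfin.trans ?_
  rw [fnorm_sq_col]
  have hsum := Finset.sum_le_sum fun j (_ : j ∈ Finset.univ) => hcol j
  rw [Finset.sum_add_distrib, ← Finset.mul_sum, ← Finset.mul_sum, ← fnorm_sq_col E] at hsum
  have hE2 := pow_le_pow_left₀ (fnorm_nonneg _) hEn 2
  have h8 := mul_le_mul_of_nonneg_left hE2 (show 0 ≤ 4 / t ^ 2 by positivity)
  rw [hal, div_le_iff₀ hn0]
  refine hsum.trans ((add_le_add_left h8 _).trans (le_of_eq ?_))
  generalize 6 * ε + σ * opNorm W / n = q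
  field_simp


end PhaseSync
end
end

section
/- Let ε ∈ (0, 1/2), h > 0, and δ > 0 with δ ≥ 2σ‖W‖/n. Suppose ẑ ∈ ℂ_1^n satisfies ẑ = F_1(ẑ) and ℓ_1(ẑ, z*) ≤ ε². For each k = 0, 1, …, ⌈nε/h⌉ set s_k = n − kh ∈ ℝ and let z_{s_k} ∈ ℂ_{≤1}^n be the fixed point of G(·, s_k, 2δn). Then (1/n)·Σ_{j=1}^n 1{|[Yẑ]_j| < δn} ≤ 9·Σ_{k=0}^{⌈nε/h⌉} ( (1/n)·Σ_{j=1}^n 1{|z*_j s_k + σ[W z_{s_k}]_j| < 4δn} ) + (9h²/(δ²n²))·1{h > δ√n}. -/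
open scoped Classical
open Matrix

noncomputable section

namespace PhaseSync

lemma ind_nonneg (P : Prop) : 0 ≤ ind P := by
  unfold ind; split_ifs <;> norm_num

lemma ind_true {P : Prop} (hP : P) : ind P = 1 := if_pos hP

lemma ind_false {P : Prop} (hP : ¬ P) : ind P = 0 := if_neg hP

lemma sum_ind_eq {n : ℕ} (P : Fin n → Prop) : ∃ m : ℕ, ∑ j, ind (P j) = (m : ℝ) := by
  refine ⟨(Finset.univ.filter P).card, ?_⟩
  simp [ind]

lemma opNorm_bound {n : ℕ} (W : Matrix (Fin n) (Fin n) ℂ) (d : Fin n → ℂ) :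
    ∑ j, ‖W.mulVec d j‖ ^ 2 ≤ opNorm W ^ 2 * ∑ j, ‖d j‖ ^ 2 := by
  have h1 := (Matrix.toEuclideanCLM (𝕜 := ℂ) (n := Fin n) W).le_opNorm (WithLp.toLp 2 d)
  have h2 : ‖(Matrix.toEuclideanCLM (𝕜 := ℂ) (n := Fin n) W) (WithLp.toLp 2 d)‖ ^ 2
      = ∑ j, ‖W.mulVec d j‖ ^ 2 := by
    rw [EuclideanSpace.norm_sq_eq]
    simp
  have h3 : ‖(WithLp.toLp 2 d : EuclideanSpace ℂ (Fin n))‖ ^ 2 = ∑ j, ‖d j‖ ^ 2 := by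
    rw [EuclideanSpace.norm_sq_eq]
  rw [← h2, ← h3, ← mul_pow]
  exact pow_le_pow_left₀ (norm_nonneg _) h1 2

lemma sq_add_bound (a b : ℂ) : ‖a + b‖ ^ 2 ≤ 2 * ‖a‖ ^ 2 + 2 * ‖b‖ ^ 2 := by
  have h1 := norm_add_le a b
  have h2 := norm_nonneg (a + b)
  nlinarith [sq_nonneg (‖a‖ - ‖b‖)]

/-- Comparison of unit directions. -/
lemma dir_bound (u v x y : ℂ) (hu : ‖u‖ = 1) (hv : ‖v‖ = 1)
    (hx : x = (‖x‖ : ℂ) * u) (hy : y = (‖y‖ : ℂ) * v) :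
    ‖y‖ * ‖u - v‖ ≤ 2 * ‖x - y‖ := by
  have h1 : (‖y‖ : ℂ) * (u - v) = ((‖y‖ : ℂ) - (‖x‖ : ℂ)) * u + (x - y) := by
    linear_combination (-1 : ℂ) * hx + hy
  have h2 : ‖(‖y‖ : ℂ) * (u - v)‖ = ‖y‖ * ‖u - v‖ := by
    rw [norm_mul]; simp
  have h3 : ‖((‖y‖ : ℂ) - (‖x‖ : ℂ)) * u‖ ≤ ‖x - y‖ := by
    rw [norm_mul, hu, mul_one, ← Complex.ofReal_sub, Complex.norm_real, Real.norm_eq_abs,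
      abs_sub_comm]
    exact abs_norm_sub_norm_le x y
  rw [← h2, h1]
  refine (norm_add_le _ _).trans ?_
  linarith

lemma key {n : ℕ} (hn : 1 ≤ n)
    (zstar : Fin n → ℂ) (hzstar : ∀ j, ‖zstar j‖ = 1)
    (σ : ℝ) (hσ : 0 < σ) (W : Matrix (Fin n) (Fin n) ℂ)
    (h : ℝ) (hh : 0 < h)
    (δ : ℝ) (hδ0 : 0 < δ) (hδ : 2 * σ * opNorm W / n ≤ δ)
    (u v x y : Fin n → ℂ) (s r : ℝ) (hsr : |s - r| ≤ h)
    (hu : ∀ j, ‖u j‖ = 1) (hxu : ∀ j, x j = (‖x j‖ : ℂ) * u j)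
    (hx : ∀ j, x j = zstar j * (s : ℂ) + (σ : ℂ) * W.mulVec u j)
    (hv : ∀ j, ‖v j‖ ≤ 1) (hvy : ∀ j, v j = gfun (2 * δ * n) (y j))
    (hy : ∀ j, y j = zstar j * (r : ℂ) + (σ : ℂ) * W.mulVec v j) :
    ∑ j, ind (‖x j‖ < δ * n) ≤ 9 * ∑ j, ind (‖y j‖ < 4 * δ * n) +
      9 * (h ^ 2 / (δ ^ 2 * n)) * ind (h > δ * Real.sqrt n) := by
  have hn0 : (0 : ℝ) < n := by exact_mod_cast hn
  set c : ℝ := δ * n with hc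
  have hc0 : 0 < c := by positivity
  have hop0 : 0 ≤ opNorm W := norm_nonneg _
  have hop : σ * opNorm W ≤ c / 2 := by
    rw [div_le_iff₀ hn0] at hδ
    linarith
  set η : ℝ := h ^ 2 / (δ ^ 2 * n) with hη
  have hη0 : 0 ≤ η := by positivity
  have hηc : n * h ^ 2 = η * c ^ 2 := by
    rw [hη, hc]; field_simp
  set X : ℝ := ∑ j, ‖x j - y j‖ ^ 2 with hX
  set D : ℝ := ∑ j, ‖u j - v j‖ ^ 2 with hD
  set T : ℝ := ∑ j, ind (‖y j‖ < 4 * δ * n) with hT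
  have hD0 : 0 ≤ D := Finset.sum_nonneg fun j _ => by positivity
  -- bound on X
  have hXb : X ≤ 2 * (n * h ^ 2) + c ^ 2 / 2 * D := by
    have e1 : ∀ j, x j - y j = zstar j * ((s - r : ℝ) : ℂ) + (σ : ℂ) * W.mulVec (u - v) j := by
      intro j
      rw [hx j, hy j, Matrix.mulVec_sub, Pi.sub_apply]
      push_cast
      ring
    have e2 : ∀ j, ‖x j - y j‖ ^ 2 ≤ 2 * h ^ 2 + 2 * σ ^ 2 * ‖W.mulVec (u - v) j‖ ^ 2 := by
      intro j
      rw [e1 j]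
      refine (sq_add_bound _ _).trans ?_
      have a1 : ‖zstar j * ((s - r : ℝ) : ℂ)‖ = |s - r| := by
        rw [norm_mul, hzstar j, one_mul, Complex.norm_real, Real.norm_eq_abs]
      have a2 : ‖(σ : ℂ) * W.mulVec (u - v) j‖ = σ * ‖W.mulVec (u - v) j‖ := by
        rw [norm_mul, Complex.norm_real, Real.norm_eq_abs, abs_of_pos hσ]
      rw [a1, a2, mul_pow]
      have a3 : |s - r| ^ 2 ≤ h ^ 2 := pow_le_pow_left₀ (abs_nonneg _) hsr 2
      linarith
    have e3 : X ≤ ∑ j : Fin n, (2 * h ^ 2 + 2 * σ ^ 2 * ‖W.mulVec (u - v) j‖ ^ 2) :=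
      Finset.sum_le_sum fun j _ => e2 j
    rw [Finset.sum_add_distrib, ← Finset.mul_sum, ← Finset.mul_sum] at e3
    simp only [Finset.sum_const, Finset.card_univ, Fintype.card_fin, nsmul_eq_mul] at e3
    have e4 := opNorm_bound W (u - v)
    simp only [Pi.sub_apply] at e4
    rw [← hD] at e4
    have e5 : (σ * opNorm W) ^ 2 ≤ (c / 2) ^ 2 := pow_le_pow_left₀ (by positivity) hop 2
    have e6 := mul_le_mul_of_nonneg_right e5 hD0
    have e7 := mul_le_mul_of_nonneg_left e4 (by positivity : 0 ≤ 2 * σ ^ 2)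
    nlinarith
  -- bound on D
  have hDb : D ≤ 4 * T + X / (4 * c ^ 2) := by
    rw [hD, hT, hX, Finset.mul_sum, Finset.sum_div, ← Finset.sum_add_distrib]
    refine Finset.sum_le_sum fun j _ => ?_
    by_cases hj : ‖y j‖ < 4 * δ * n
    · rw [ind_true hj]
      have b1 : ‖u j - v j‖ ≤ 2 := by
        have := norm_sub_le (u j) (v j)
        linarith [hu j, hv j]
      have b2 : ‖u j - v j‖ ^ 2 ≤ 2 ^ 2 := pow_le_pow_left₀ (norm_nonneg _) b1 2
      have b3 : 0 ≤ ‖x j - y j‖ ^ 2 / (4 * c ^ 2) := by positivity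
      linarith
    · rw [ind_false hj]
      have hyc : 4 * c ≤ ‖y j‖ := by
        have := not_lt.mp hj
        rw [hc]; linarith
      have hy0 : 0 < ‖y j‖ := by linarith
      have hy0' : (‖y j‖ : ℂ) ≠ 0 := by exact_mod_cast hy0.ne'
      have hvj : v j = y j / (‖y j‖ : ℂ) := by
        have hm : max ‖y j‖ (2 * δ * n) = ‖y j‖ := max_eq_left (by
          rw [mul_assoc]; linarith)
        rw [hvy j, gfun, hm]
      have hvn : ‖v j‖ = 1 := by
        rw [hvj, norm_div, Complex.norm_real, norm_norm, div_self hy0.ne']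
      have hyv : y j = (‖y j‖ : ℂ) * v j := by
        rw [hvj]; field_simp
      have b1 := dir_bound (u j) (v j) (x j) (y j) (hu j) hvn (hxu j) hyv
      have b2 : 2 * c * ‖u j - v j‖ ≤ ‖x j - y j‖ := by
        have := mul_le_mul_of_nonneg_right hyc (norm_nonneg (u j - v j))
        linarith
      have b3 := pow_le_pow_left₀ (by positivity) b2 2
      rw [mul_zero, zero_add, le_div_iff₀ (by positivity)]
      linarith
  -- bound on the count
  have hSb : ∑ j, ind (‖x j‖ < c) ≤ T + X / (9 * c ^ 2) := by
    rw [hT, hX, Finset.sum_div, ← Finset.sum_add_distrib]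
    refine Finset.sum_le_sum fun j _ => ?_
    have b3 : 0 ≤ ‖x j - y j‖ ^ 2 / (9 * c ^ 2) := by positivity
    by_cases hj : ‖x j‖ < c
    · rw [ind_true hj]
      by_cases hk : ‖y j‖ < 4 * δ * n
      · rw [ind_true hk]; linarith
      · rw [ind_false hk, zero_add, le_div_iff₀ (by positivity)]
        have hyc : 4 * c ≤ ‖y j‖ := by
          have := not_lt.mp hk
          rw [hc]; linarith
        have b1 : 3 * c ≤ ‖x j - y j‖ := by
          have := norm_sub_norm_le (y j) (x j)
          rw [norm_sub_rev] at this
          linarith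
        have b2 := pow_le_pow_left₀ (by positivity) b1 2
        linarith
    · rw [ind_false hj]
      linarith [ind_nonneg (‖y j‖ < 4 * δ * n)]
  obtain ⟨mS, hmS⟩ := sum_ind_eq (fun j => ‖x j‖ < c)
  obtain ⟨mT, hmT⟩ := sum_ind_eq (fun j => ‖y j‖ < 4 * δ * n)
  have hTm : T = mT := hmT
  set Z : ℝ := X / c ^ 2 with hZ
  have hXZ : X = Z * c ^ 2 := by rw [hZ]; field_simp
  have hc2 : 0 < c ^ 2 := by positivity
  have f1 : Z ≤ 2 * η + D / 2 := by
    rw [hZ, div_le_iff₀ hc2]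
    rw [hηc] at hXb
    linarith
  have f2 : X / (4 * c ^ 2) = Z / 4 := by rw [hXZ]; field_simp
  have f3 : X / (9 * c ^ 2) = Z / 9 := by rw [hXZ]; field_simp
  rw [f2] at hDb
  rw [f3] at hSb
  have hT0 : 0 ≤ T := by rw [hTm]; positivity
  by_cases hcase : h > δ * Real.sqrt n
  · rw [ind_true hcase]
    linarith
  · rw [ind_false hcase]
    have hη1 : η ≤ 1 := by
      rw [hη, div_le_one (by positivity)]
      have := pow_le_pow_left₀ hh.le (not_lt.mp hcase) 2
      rwa [mul_pow, Real.sq_sqrt hn0.le] at this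
    rcases Nat.eq_zero_or_pos mT with h0 | h0
    · have hT00 : T = 0 := by rw [hTm, h0]; simp
      have hlt : (mS : ℝ) < 1 := by
        have : ∑ j, ind (‖x j‖ < c) = (mS : ℝ) := hmS
        linarith
      have : mS = 0 := by
        have : mS < 1 := by exact_mod_cast hlt
        omega
      have h5 : ∑ j, ind (‖x j‖ < c) = (mS : ℝ) := hmS
      rw [h5, this, hT00]; simp
    · have : (1 : ℝ) ≤ T := by rw [hTm]; exact_mod_cast h0
      linarith

/-- The loss bounds the correlation from below. -/
lemma loss_corr {n : ℕ} (hn : 1 ≤ n) (zstar zhat : Fin n → ℂ)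
    (hzstar : ∀ j, ‖zstar j‖ = 1) (hzhat1 : ∀ j, ‖zhat j‖ = 1) :
    2 - 2 * ‖∑ j, star (zstar j) * zhat j‖ / n ≤ loss1 zhat zstar := by
  have hn0 : (0 : ℝ) < n := by exact_mod_cast hn
  unfold loss1
  refine le_csInf ⟨_, 1, by simp, rfl⟩ ?_
  rintro r ⟨a, ha, rfl⟩
  have h1 : enorm (zhat - a • zstar) ^ 2 = ∑ j, ‖zhat j - a * zstar j‖ ^ 2 := by
    unfold enorm
    rw [Real.sq_sqrt (Finset.sum_nonneg fun j _ => by positivity)]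
    simp
  have h2 : ∀ j, ‖zhat j - a * zstar j‖ ^ 2
      = 2 - 2 * (star a * (star (zstar j) * zhat j)).re := by
    intro j
    have e1 : ‖zhat j‖ ^ 2 = 1 := by rw [hzhat1 j]; norm_num
    have e2 : ‖a * zstar j‖ ^ 2 = 1 := by rw [norm_mul, hzstar j, ha]; norm_num
    rw [← Complex.normSq_eq_norm_sq] at e1 e2 ⊢
    rw [Complex.normSq_sub, e1, e2]
    have : zhat j * (starRingEnd ℂ) (a * zstar j) = star a * (star (zstar j) * zhat j) := by
      simp only [map_mul, Complex.star_def]; ring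
    rw [this]; ring
  have h3 : ∑ j, ‖zhat j - a * zstar j‖ ^ 2
      = 2 * n - 2 * (star a * ∑ j, star (zstar j) * zhat j).re := by
    rw [Finset.sum_congr rfl fun j _ => h2 j, Finset.sum_sub_distrib, ← Finset.mul_sum,
      ← Complex.re_sum, ← Finset.mul_sum]
    simp; ring
  have h4 : (star a * ∑ j, star (zstar j) * zhat j).re ≤ ‖∑ j, star (zstar j) * zhat j‖ := by
    refine (Complex.re_le_norm _).trans ?_
    rw [norm_mul, norm_star, ha, one_mul]
  rw [h1, h3, le_div_iff₀ hn0, sub_mul, div_mul_cancel₀ _ hn0.ne']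
  linarith

theorem stmt3 {n : ℕ} (hn : 1 ≤ n)
    (zstar : Fin n → ℂ) (hzstar : ∀ j, ‖zstar j‖ = 1)
    (σ : ℝ) (hσ : 0 < σ) (W : Matrix (Fin n) (Fin n) ℂ) (hW : W.IsHermitian)
    (Y : Matrix (Fin n) (Fin n) ℂ)
    (hY : Y = Matrix.vecMulVec zstar (star zstar) + (σ : ℂ) • W)
    (ε : ℝ) (hε : 0 < ε ∧ ε < 1 / 2) (h : ℝ) (hh : 0 < h)
    (δ : ℝ) (hδ0 : 0 < δ) (hδ : 2 * σ * opNorm W / n ≤ δ)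
    (zhat : Fin n → ℂ) (hzhat1 : ∀ j, ‖zhat j‖ = 1)
    (hzhat2 : zhat = F1 Y zhat) (hzhat3 : loss1 zhat zstar ≤ ε ^ 2)
    (zfam : ℕ → Fin n → ℂ)
    (hzfam : ∀ k ≤ Nat.ceil ((n : ℝ) * ε / h),
      (∀ i, ‖zfam k i‖ ≤ 1) ∧
      zfam k = G zstar σ W (zfam k) (((n : ℝ) - (k : ℝ) * h : ℝ) : ℂ) (2 * δ * n)) :
    (1 / (n : ℝ)) * ∑ j : Fin n, ind (‖Y.mulVec zhat j‖ < δ * n) ≤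
      9 * (∑ k ∈ Finset.range (Nat.ceil ((n : ℝ) * ε / h) + 1),
        (1 / (n : ℝ)) * ∑ j : Fin n,
          ind (‖zstar j * (((n : ℝ) - (k : ℝ) * h : ℝ) : ℂ) +
            (σ : ℂ) * W.mulVec (zfam k) j‖ < 4 * δ * n)) +
      (9 * h ^ 2 / (δ ^ 2 * (n : ℝ) ^ 2)) * ind (h > δ * Real.sqrt n) := by
  have hn0 : (0 : ℝ) < n := by exact_mod_cast hn
  have hcorr := (loss_corr hn zstar zhat hzstar hzhat1).trans hzhat3
  set q : ℂ := ∑ j, star (zstar j) * zhat j with hq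
  set s : ℝ := ‖q‖ with hs
  obtain ⟨hε0, hε1⟩ := hε
  have hs1 : n - s ≤ n * ε := by
    have h1 : 2 - ε ^ 2 ≤ 2 * s / n := by linarith
    rw [le_div_iff₀ hn0] at h1
    have h2 : ε ^ 2 ≤ 2 * ε := by nlinarith
    have h3 := mul_le_mul_of_nonneg_right h2 hn0.le
    linarith
  have hs0 : 0 < s := by nlinarith
  have hsn : s ≤ n := by
    rw [hs, hq]
    refine (norm_sum_le _ _).trans ?_
    simp [hzstar, hzhat1]
  -- the grid point
  set k : ℕ := Nat.floor ((n - s) / h) with hk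
  have hk0 : 0 ≤ (n - s) / h := div_nonneg (by linarith) hh.le
  have hk1 : (k : ℝ) * h ≤ n - s := by
    rw [← le_div_iff₀ hh]; exact Nat.floor_le hk0
  have hk2 : n - s < (k + 1) * h := by
    rw [← div_lt_iff₀ hh]; exact Nat.lt_floor_add_one _
  have hk3 : k ≤ Nat.ceil ((n : ℝ) * ε / h) := by
    refine (Nat.floor_le_floor ?_).trans (Nat.floor_le_ceil _)
    gcongr
  obtain ⟨hz1, hz2⟩ := hzfam k hk3
  -- rotation
  set a : ℂ := star q / (s : ℂ) with ha
  have hs0' : (s : ℂ) ≠ 0 := by exact_mod_cast hs0.ne'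
  have han : ‖a‖ = 1 := by
    rw [ha, norm_div, norm_star, Complex.norm_real, Real.norm_eq_abs, abs_of_pos hs0, ← hs,
      div_self hs0.ne']
  have haq : a * q = s := by
    rw [ha, div_mul_eq_mul_div, div_eq_iff hs0', Complex.star_def, Complex.conj_mul', ← hs]
    ring
  have hYz : ∀ j, Y.mulVec zhat j = zstar j * q + (σ : ℂ) * W.mulVec zhat j := by
    intro j
    rw [hY, Matrix.add_mulVec, Matrix.smul_mulVec, Pi.add_apply, Pi.smul_apply, smul_eq_mul]
    congr 1
    simp only [Matrix.mulVec, dotProduct, Matrix.vecMulVec_apply, hq, Finset.mul_sum,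
      Pi.star_apply, mul_assoc]
  have hYu : ∀ j, Y.mulVec zhat j = (‖Y.mulVec zhat j‖ : ℂ) * zhat j := by
    intro j
    by_cases h0 : Y.mulVec zhat j = 0
    · rw [h0]; simp
    · have h1 := congrFun hzhat2 j
      rw [F1, if_pos h0] at h1
      have h2 : (‖Y.mulVec zhat j‖ : ℂ) ≠ 0 := by exact_mod_cast (norm_pos_iff.mpr h0).ne'
      rw [eq_div_iff h2] at h1
      rw [mul_comm]; exact h1.symm
  have hnorm : ∀ j, ‖a * Y.mulVec zhat j‖ = ‖Y.mulVec zhat j‖ := by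
    intro j; rw [norm_mul, han, one_mul]
  have hkey := key hn zstar hzstar σ hσ W h hh δ hδ0 hδ (a • zhat) (zfam k)
    (fun j => a * Y.mulVec zhat j)
    (fun j => zstar j * (((n : ℝ) - (k : ℝ) * h : ℝ) : ℂ) + (σ : ℂ) * W.mulVec (zfam k) j)
    s ((n : ℝ) - (k : ℝ) * h) (by rw [abs_le]; constructor <;> linarith)
    (fun j => by rw [Pi.smul_apply, smul_eq_mul, norm_mul, han, hzhat1, one_mul])
    (fun j => by
      simp only [hnorm, Pi.smul_apply, smul_eq_mul]
      linear_combination a * hYu j)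
    (fun j => by
      simp only [Matrix.mulVec_smul, Pi.smul_apply, smul_eq_mul]
      rw [hYz j, ← haq]; ring)
    hz1 (fun j => congrFun hz2 j) (fun j => rfl)
  simp only [hnorm] at hkey
  have hsum := Finset.single_le_sum (s := Finset.range (Nat.ceil ((n : ℝ) * ε / h) + 1))
    (f := fun k : ℕ => (1 / (n : ℝ)) * ∑ j : Fin n,
          ind (‖zstar j * (((n : ℝ) - (k : ℝ) * h : ℝ) : ℂ) +
            (σ : ℂ) * W.mulVec (zfam k) j‖ < 4 * δ * n))
    (fun i _ => mul_nonneg (by positivity) (Finset.sum_nonneg fun j _ => ind_nonneg _))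
    (Finset.mem_range.mpr (Nat.lt_succ_of_le hk3))
  have hfin := mul_le_mul_of_nonneg_left hkey (by positivity : 0 ≤ 1 / (n : ℝ))
  refine hfin.trans ?_
  rw [mul_add]
  refine add_le_add ?_ (le_of_eq ?_)
  · refine le_trans (le_of_eq ?_) (mul_le_mul_of_nonneg_left hsum (by norm_num : (0 : ℝ) ≤ 9))
    ring
  · rw [← mul_assoc]
    congr 1
    field_simp

end PhaseSync
end
end

section
/- Let m ∈ ℕ. For any vectors x, y, u, v ∈ ℂ^m such that ‖u‖ ≤ 1 and ‖v‖ ≤ 1, and for any real t > 0, one has ‖( x/‖x‖·1{x ≠ 0} + u·1{x = 0} ) − ( y/‖y‖·1{y ≠ 0} + v·1{y = 0} )‖ ≤ 2‖x − y‖/t + 2·1{‖y‖ < t}. -/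
open scoped Classical
open Matrix

noncomputable section

namespace PhaseSync

theorem enorm_eq_norm {k : ℕ} (v : Fin k → ℂ) : enorm v = ‖WithLp.toLp 2 v‖ := by
  rw [EuclideanSpace.norm_eq]; rfl

theorem core_bound {E : Type*} [NormedAddCommGroup E] [NormedSpace ℝ E] (x y a b : E)
    (ha : ‖a‖ ≤ 1) (hb : ‖b‖ ≤ 1) (hx : ‖x‖ • a = x) (hy : ‖y‖ • b = y) (t : ℝ) (ht : 0 < t) :
    ‖a - b‖ ≤ 2 * ‖x - y‖ / t + 2 * ind (‖y‖ < t) := by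
  unfold ind
  split_ifs with h
  · have h1 := norm_sub_le a b
    have h2 : 0 ≤ 2 * ‖x - y‖ / t := by positivity
    linarith
  · push Not at h
    rw [mul_zero, add_zero, le_div_iff₀ ht]
    have e : ‖y‖ • (a - b) = (‖y‖ - ‖x‖) • a + (x - y) := by
      rw [smul_sub, sub_smul, hx, hy]; abel
    have h1 : ‖y‖ * ‖a - b‖ ≤ |‖y‖ - ‖x‖| * ‖a‖ + ‖x - y‖ := by
      have := norm_add_le ((‖y‖ - ‖x‖) • a) (x - y)
      rwa [← e, norm_smul, norm_smul, norm_norm, Real.norm_eq_abs] at this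
    have h2 : |‖y‖ - ‖x‖| ≤ ‖x - y‖ := by
      rw [norm_sub_rev]; exact abs_norm_sub_norm_le y x
    have h3 : |‖y‖ - ‖x‖| * ‖a‖ ≤ |‖y‖ - ‖x‖| :=
      mul_le_of_le_one_right (abs_nonneg _) ha
    have h4 := mul_le_mul_of_nonneg_right h (norm_nonneg (a - b))
    linarith

theorem normalize_props {m : ℕ} (x u : Fin m → ℂ) (hu : enorm u ≤ 1) :
    ‖(WithLp.toLp 2 (fun i => if x ≠ 0 then x i / (enorm x : ℂ) else u i) :
        EuclideanSpace ℂ (Fin m))‖ ≤ 1 ∧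
    ‖(WithLp.toLp 2 x : EuclideanSpace ℂ (Fin m))‖ •
      (WithLp.toLp 2 (fun i => if x ≠ 0 then x i / (enorm x : ℂ) else u i) :
        EuclideanSpace ℂ (Fin m)) = WithLp.toLp 2 x := by
  by_cases hx : x = 0
  · subst hx
    rw [enorm_eq_norm] at hu
    constructor
    · simpa using hu
    · simp
  · have hn : ‖(WithLp.toLp 2 x : EuclideanSpace ℂ (Fin m))‖ ≠ 0 := by
      rw [norm_ne_zero_iff]
      intro h
      exact hx (by simpa using h)
    have e : ‖(WithLp.toLp 2 x : EuclideanSpace ℂ (Fin m))‖ •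
      (WithLp.toLp 2 (fun i => if x ≠ 0 then x i / (enorm x : ℂ) else u i) :
        EuclideanSpace ℂ (Fin m)) = WithLp.toLp 2 x := by
      ext i
      have hc : ((‖(WithLp.toLp 2 x : EuclideanSpace ℂ (Fin m))‖ : ℝ) : ℂ) ≠ 0 := by
        exact_mod_cast hn
      simp only [PiLp.smul_apply, enorm_eq_norm, ne_eq, hx, not_false_eq_true, if_true,
        Complex.real_smul]
      field_simp
    refine ⟨?_, e⟩
    have h := congrArg norm e
    rw [norm_smul, norm_norm] at h
    exact le_of_eq (mul_left_cancel₀ hn (by rw [h, mul_one]))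

theorem stmt7 {m : ℕ} (x y u v : Fin m → ℂ) (hu : enorm u ≤ 1) (hv : enorm v ≤ 1)
    (t : ℝ) (ht : 0 < t) :
    enorm (fun i =>
      (if x ≠ 0 then x i / (enorm x : ℂ) else u i) -
      (if y ≠ 0 then y i / (enorm y : ℂ) else v i)) ≤
      2 * enorm (fun i => x i - y i) / t + 2 * ind (enorm y < t) := by
  obtain ⟨ha, hxa⟩ := normalize_props x u hu
  obtain ⟨hb, hyb⟩ := normalize_props y v hv
  have h := core_bound _ _ _ _ ha hb hxa hyb t ht
  rw [← enorm_eq_norm y, ← WithLp.toLp_sub, ← WithLp.toLp_sub, ← enorm_eq_norm,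
    ← enorm_eq_norm] at h
  exact h

end PhaseSync
end
end

section
/- If ẑ ∈ ℂ_1^n maximizes the (real-valued, since Y is Hermitian) objective Re⟨Y, zzᴴ⟩ over all z ∈ ℂ_1^n, then ℓ_1(ẑ, z*) ≤ 8σ‖W‖/n. -/
open scoped Classical
open Matrix

noncomputable section

namespace PhaseSync

lemma aux_quad {n : ℕ} (A : Matrix (Fin n) (Fin n) ℂ) (z : Fin n → ℂ) (hz : ∀ j, ‖z j‖ = 1) :
    ‖Matrix.trace (A * Matrix.vecMulVec z (star z))‖ ≤ opNorm A * n := by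
  have h1 : Matrix.trace (A * Matrix.vecMulVec z (star z))
      = inner ℂ (WithLp.toLp 2 z : EuclideanSpace ℂ (Fin n))
        (Matrix.toEuclideanCLM (𝕜 := ℂ) (n := Fin n) A (WithLp.toLp 2 z)) := by
    rw [Matrix.mul_vecMulVec, Matrix.trace_vecMulVec]
    simp [EuclideanSpace.inner_eq_star_dotProduct]
  have h2 : ‖(WithLp.toLp 2 z : EuclideanSpace ℂ (Fin n))‖ ^ 2 = n := by
    rw [EuclideanSpace.norm_sq_eq]; simp [hz]
  rw [h1]
  refine (norm_inner_le_norm _ _).trans ?_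
  have h3 := (Matrix.toEuclideanCLM (𝕜 := ℂ) (n := Fin n) A).le_opNorm (WithLp.toLp 2 z)
  have h4 := mul_le_mul_of_nonneg_left h3 (norm_nonneg (WithLp.toLp 2 z : EuclideanSpace ℂ (Fin n)))
  unfold opNorm
  rw [← h2]
  linarith

lemma aux_rank {n : ℕ} (w z : Fin n → ℂ) :
    (Matrix.trace (Matrix.vecMulVec w (star w) * Matrix.vecMulVec z (star z))).re
      = ‖star w ⬝ᵥ z‖ ^ 2 := by
  have h : star z ⬝ᵥ w = star (star w ⬝ᵥ z) := by
    rw [Matrix.star_dotProduct]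
  have h2 : Matrix.trace (Matrix.vecMulVec w (star w) * Matrix.vecMulVec z (star z))
      = (star w ⬝ᵥ z) * star (star w ⬝ᵥ z) := by
    rw [Matrix.vecMulVec_mul_vecMulVec, Matrix.trace_vecMulVec, ← h]
    simp [dotProduct_comm, mul_comm]
  rw [h2, ← Complex.normSq_eq_norm_sq]
  simp [Complex.mul_re, Complex.normSq_apply]

lemma aux_exists (s : ℂ) : ∃ a : ℂ, ‖a‖ = 1 ∧ (star a * s).re = ‖s‖ := by
  by_cases hs : s = 0
  · exact ⟨1, by simp, by simp [hs]⟩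
  · have h : ‖s‖ ≠ 0 := by simpa using hs
    refine ⟨s / ‖s‖, by simp [h], ?_⟩
    have : star (s / (‖s‖ : ℂ)) * s = ((‖s‖ : ℝ) : ℂ) := by
      have hc : ((‖s‖ : ℝ) : ℂ) ≠ 0 := by exact_mod_cast h
      have := Complex.conj_mul' s
      simp only [Complex.star_def, map_div₀, Complex.conj_ofReal]
      field_simp
      rw [← this]
    rw [this, Complex.ofReal_re]

theorem stmt11 {n : ℕ} (hn : 1 ≤ n)
    (zstar : Fin n → ℂ) (hzstar : ∀ j, ‖zstar j‖ = 1)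
    (σ : ℝ) (hσ : 0 < σ) (W : Matrix (Fin n) (Fin n) ℂ) (hW : W.IsHermitian)
    (Y : Matrix (Fin n) (Fin n) ℂ)
    (hY : Y = Matrix.vecMulVec zstar (star zstar) + (σ : ℂ) • W)
    (zhat : Fin n → ℂ) (hzhat : ∀ j, ‖zhat j‖ = 1)
    (hmax : ∀ z : Fin n → ℂ, (∀ j, ‖z j‖ = 1) →
      (Matrix.trace (Yᴴ * Matrix.vecMulVec z (star z))).re ≤
        (Matrix.trace (Yᴴ * Matrix.vecMulVec zhat (star zhat))).re) :
    loss1 zhat zstar ≤ 8 * σ * opNorm W / n := by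
  have hn0 : (0 : ℝ) < n := by exact_mod_cast hn
  have hq : ∀ z : Fin n → ℂ, (Matrix.trace (Yᴴ * Matrix.vecMulVec z (star z))).re
      = ‖star zstar ⬝ᵥ z‖ ^ 2 + σ * (Matrix.trace (W * Matrix.vecMulVec z (star z))).re := by
    intro z
    have hYH : Yᴴ = Matrix.vecMulVec zstar (star zstar) + (σ : ℂ) • W := by
      rw [hY, Matrix.conjTranspose_add, Matrix.conjTranspose_smul, hW.eq,
        Matrix.conjTranspose_vecMulVec]
      simp
    rw [hYH, Matrix.add_mul, Matrix.trace_add, Complex.add_re, aux_rank, Matrix.smul_mul,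
      Matrix.trace_smul, smul_eq_mul, Complex.re_ofReal_mul]
  have hm := hmax zstar hzstar
  rw [hq, hq] at hm
  have hself : star zstar ⬝ᵥ zstar = (n : ℂ) := by
    simp [dotProduct, Complex.conj_mul', hzstar]
  rw [hself, Complex.norm_natCast] at hm
  have b1 := (abs_le.1 ((Complex.abs_re_le_norm _).trans (aux_quad W zstar hzstar))).1
  have b2 := (abs_le.1 ((Complex.abs_re_le_norm _).trans (aux_quad W zhat hzhat))).2
  have hop : 0 ≤ opNorm W := norm_nonneg _
  set t := ‖star zstar ⬝ᵥ zhat‖ with ht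
  have ht0 : 0 ≤ t := norm_nonneg _
  have key : (n : ℝ) - t ≤ 2 * σ * opNorm W := by
    by_contra hc
    push Not at hc
    have c1 := mul_le_mul_of_nonneg_left b1 hσ.le
    have c2 := mul_le_mul_of_nonneg_left b2 hσ.le
    have c3 : 0 ≤ σ * opNorm W := by positivity
    have c4 := mul_lt_mul_of_pos_right hc hn0
    have c5 : 0 ≤ ((n : ℝ) - t) * t := mul_nonneg (by linarith) ht0
    nlinarith
  obtain ⟨a, ha, hat⟩ := aux_exists (star zstar ⬝ᵥ zhat)
  have hval : enorm (zhat - a • zstar) ^ 2 = 2 * n - 2 * t := by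
    unfold enorm
    rw [Real.sq_sqrt (by positivity)]
    have : ∀ i, ‖(zhat - a • zstar) i‖ ^ 2 = 2 - 2 * (star a * (star (zstar i) * zhat i)).re := by
      intro i
      have e1 : Complex.normSq (zhat i) = 1 := by rw [Complex.normSq_eq_norm_sq, hzhat]; norm_num
      have e2 : Complex.normSq (a * zstar i) = 1 := by
        rw [Complex.normSq_eq_norm_sq, norm_mul, hzstar, ha]; norm_num
      rw [← Complex.normSq_eq_norm_sq, Pi.sub_apply, Pi.smul_apply, smul_eq_mul,
        Complex.normSq_sub, e1, e2]
      simp [Complex.mul_re, Complex.mul_im]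
      ring
    rw [Finset.sum_congr rfl (fun i _ => this i), Finset.sum_sub_distrib, ← Finset.mul_sum,
      ← Complex.re_sum, ← Finset.mul_sum]
    have : ∑ i, star (zstar i) * zhat i = star zstar ⬝ᵥ zhat := rfl
    rw [this, hat]
    simp [ht, mul_comm]
  have hle : loss1 zhat zstar ≤ enorm (zhat - a • zstar) ^ 2 / n := by
    refine csInf_le ⟨0, ?_⟩ ⟨a, ha, rfl⟩
    rintro r ⟨b, -, rfl⟩
    positivity
  refine hle.trans ?_
  rw [hval]
  have c3 : 0 ≤ σ * opNorm W := by positivity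
  gcongr
  nlinarith

end PhaseSync
end
end

section
/- For any s ∈ ℂ and any real t > 0 with t ≥ 2σ‖W‖, the map G(·, s, t) has exactly one fixed point in ℂ_{≤1}^n: there exists one and only one z ∈ ℂ_{≤1}^n with z = G(z, s, t). Moreover, this fixed point is the limit of the iterates z^{(0)} = z*, z^{(T)} = G(z^{(T−1)}, s, t) for T ∈ ℕ: z = lim_{T→∞} z^{(T)}. -/
open scoped Classical
open Matrix

noncomputable section

namespace PhaseSync

lemma gfun_norm_le {t : ℝ} (ht : 0 < t) (x : ℂ) : ‖gfun t x‖ ≤ 1 := by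
  have hm : 0 < max ‖x‖ t := lt_max_of_lt_right ht
  unfold gfun
  rw [norm_div, Complex.norm_real, Real.norm_eq_abs, abs_of_pos hm, div_le_one hm]
  exact le_max_left _ _

lemma gfun_var {t : ℝ} (ht : 0 < t) (x q : ℂ) (hq : ‖q‖ ≤ 1) :
    0 ≤ inner ℝ (x - t • gfun t x) (gfun t x - q) := by
  by_cases h : ‖x‖ ≤ t
  · have : x - t • gfun t x = 0 := by
      unfold gfun
      rw [max_eq_right h, Complex.real_smul]
      have : (t : ℂ) ≠ 0 := by exact_mod_cast ht.ne'
      field_simp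
      simp
    rw [this, inner_zero_left]
  · push Not at h
    have hx : 0 < ‖x‖ := ht.trans h
    have hxc : (‖x‖ : ℂ) ≠ 0 := by exact_mod_cast hx.ne'
    have hp : ‖gfun t x‖ = 1 := by
      unfold gfun
      rw [max_eq_left h.le, norm_div, Complex.norm_real, Real.norm_eq_abs, abs_of_pos hx,
        div_self hx.ne']
    have : x - t • gfun t x = (‖x‖ - t) • gfun t x := by
      unfold gfun
      rw [max_eq_left h.le, Complex.real_smul, Complex.real_smul]
      push_cast
      field_simp
    rw [this, real_inner_smul_left, inner_sub_right, real_inner_self_eq_norm_sq, hp]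
    have h2 := real_inner_le_norm (gfun t x) q
    rw [hp] at h2
    apply mul_nonneg <;> linarith

lemma gfun_lip {t : ℝ} (ht : 0 < t) (x y : ℂ) :
    t * ‖gfun t x - gfun t y‖ ≤ ‖x - y‖ := by
  have h1 := gfun_var ht x (gfun t y) (gfun_norm_le ht y)
  have h2 := gfun_var ht y (gfun t x) (gfun_norm_le ht x)
  set p := gfun t x
  set q := gfun t y
  have h3 : inner ℝ (x - y) (p - q) = inner ℝ (x - t • p) (p - q) + inner ℝ (y - t • q) (q - p)
      + t * ‖p - q‖ ^ 2 := by
    rw [← real_inner_self_eq_norm_sq, ← real_inner_smul_left, ← neg_sub p q, inner_neg_right,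
      ← sub_eq_add_neg, ← inner_sub_left, ← inner_add_left, smul_sub]
    congr 1
    abel
  have h4 := real_inner_le_norm (x - y) (p - q)
  rcases (norm_nonneg (p - q)).eq_or_lt with h | h
  · rw [← h]; simp
  · nlinarith

lemma G_lip {n : ℕ} (zstar : Fin n → ℂ) {σ : ℝ} (hσ : 0 < σ) (W : Matrix (Fin n) (Fin n) ℂ)
    (s : ℂ) {t : ℝ} (ht : 0 < t) (ht2 : 2 * σ * opNorm W ≤ t) (z w : EuclideanSpace ℂ (Fin n)) :
    ‖WithLp.toLp 2 (G zstar σ W z.ofLp s t) - WithLp.toLp 2 (G zstar σ W w.ofLp s t)‖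
      ≤ (1 / 2) * ‖z - w‖ := by
  set L := Matrix.toEuclideanCLM (𝕜 := ℂ) (n := Fin n) W with hL
  have h1 : t * ‖WithLp.toLp 2 (G zstar σ W z.ofLp s t) - WithLp.toLp 2 (G zstar σ W w.ofLp s t)‖
      ≤ σ * ‖L (z - w)‖ := by
    rw [EuclideanSpace.norm_eq, EuclideanSpace.norm_eq, ← Real.sqrt_sq ht.le,
      ← Real.sqrt_sq hσ.le, ← Real.sqrt_mul (sq_nonneg _), ← Real.sqrt_mul (sq_nonneg _),
      Finset.mul_sum, Finset.mul_sum, Real.sqrt_sq ht.le, Real.sqrt_sq hσ.le]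
    apply Real.sqrt_le_sqrt
    apply Finset.sum_le_sum
    intro j _
    rw [← mul_pow, ← mul_pow]
    apply pow_le_pow_left₀ (by positivity)
    refine (gfun_lip ht _ _).trans (le_of_eq ?_)
    have e : L (z - w) j = W.mulVec z.ofLp j - W.mulVec w.ofLp j := by
      rw [hL, map_sub]
      simp
    rw [e, add_sub_add_left_eq_sub, ← mul_sub, norm_mul, Complex.norm_real, Real.norm_eq_abs,
      abs_of_pos hσ]
  have h2 : ‖L (z - w)‖ ≤ opNorm W * ‖z - w‖ := L.le_opNorm _
  have h3 : σ * ‖L (z - w)‖ ≤ σ * (opNorm W * ‖z - w‖) := mul_le_mul_of_nonneg_left h2 hσ.le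
  have h4 := mul_le_mul_of_nonneg_right ht2 (norm_nonneg (z - w))
  refine le_of_mul_le_mul_left ?_ ht
  linarith

theorem stmt14 {n : ℕ} (hn : 1 ≤ n)
    (zstar : Fin n → ℂ) (hzstar : ∀ j, ‖zstar j‖ = 1)
    (σ : ℝ) (hσ : 0 < σ) (W : Matrix (Fin n) (Fin n) ℂ) (hW : W.IsHermitian)
    (s : ℂ) (t : ℝ) (ht : 0 < t) (ht2 : 2 * σ * opNorm W ≤ t)
    (zseq : ℕ → Fin n → ℂ) (hz0 : zseq 0 = zstar)
    (hzT : ∀ T : ℕ, zseq (T + 1) = G zstar σ W (zseq T) s t) :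
    ∃ z : Fin n → ℂ,
      ((∀ j, ‖z j‖ ≤ 1) ∧ z = G zstar σ W z s t) ∧
      (∀ z' : Fin n → ℂ, ((∀ j, ‖z' j‖ ≤ 1) ∧ z' = G zstar σ W z' s t) → z' = z) ∧
      Filter.Tendsto zseq Filter.atTop (nhds z) := by
  let f : EuclideanSpace ℂ (Fin n) → EuclideanSpace ℂ (Fin n) :=
    fun z => WithLp.toLp 2 (G zstar σ W z.ofLp s t)
  have hf : ContractingWith (1 / 2) f := by
    refine ⟨?_, LipschitzWith.of_dist_le_mul fun z w => ?_⟩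
    · rw [← NNReal.coe_lt_coe]; norm_num
    · rw [dist_eq_norm, dist_eq_norm]
      simpa using G_lip zstar hσ W s ht ht2 z w
  have hfix : f (hf.fixedPoint f) = hf.fixedPoint f := hf.fixedPoint_isFixedPt
  have hfix' : (hf.fixedPoint f).ofLp = G zstar σ W (hf.fixedPoint f).ofLp s t :=
    (congrArg WithLp.ofLp hfix).symm
  refine ⟨(hf.fixedPoint f).ofLp, ⟨fun j => ?_, hfix'⟩, ?_, ?_⟩
  · rw [hfix']
    exact gfun_norm_le ht _
  · rintro z' ⟨-, h⟩
    have : WithLp.toLp 2 z' = hf.fixedPoint f :=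
      hf.fixedPoint_unique (x := WithLp.toLp 2 z') (congrArg (WithLp.toLp 2) h.symm)
    exact congrArg WithLp.ofLp this
  · have h1 := hf.tendsto_iterate_fixedPoint (WithLp.toLp 2 zstar)
    have h2 : zseq = fun T => (f^[T] (WithLp.toLp 2 zstar)).ofLp := by
      funext T
      induction T with
      | zero => simpa using hz0
      | succ k ih => rw [hzT, ih, Function.iterate_succ_apply']
    rw [h2]
    exact ((PiLp.continuous_ofLp 2 _).tendsto _).comp h1

end PhaseSync
end
end

section
/- Suppose ẑ ∈ ℂ_1^n satisfies ẑ = F_1(ẑ), and set ŝ = (z*)ᴴ ẑ. For any real t > 0 with t ≥ 4σ‖W‖, let z ∈ ℂ_{≤1}^n be the fixed point of G(·, ŝ, t). Then ‖ẑ − z‖² ≤ 32·Σ_{j=1}^n 1{|z*_j ŝ + σ[Wz]_j| < t}. -/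
open scoped Classical
open Matrix

noncomputable section

namespace PhaseSync

lemma mulVec_bound {k : ℕ} (A : Matrix (Fin k) (Fin k) ℂ) (v : Fin k → ℂ) :
    ∑ i, ‖A.mulVec v i‖ ^ 2 ≤ opNorm A ^ 2 * ∑ i, ‖v i‖ ^ 2 := by
  have h := (Matrix.toEuclideanCLM (𝕜 := ℂ) (n := Fin k) A).le_opNorm (WithLp.toLp 2 v)
  have h2 := pow_le_pow_left₀ (norm_nonneg _) h 2
  rw [mul_pow, EuclideanSpace.norm_sq_eq, EuclideanSpace.norm_sq_eq] at h2
  simpa [opNorm] using h2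

lemma unit_diff (u v a b : ℂ) (hu : ‖u‖ = 1) (ha : a = (‖a‖ : ℂ) * u)
    (hb : b = (‖b‖ : ℂ) * v) : ‖b‖ * ‖u - v‖ ≤ 2 * ‖a - b‖ := by
  have e : (‖b‖ : ℂ) * (u - v) = ((‖b‖ : ℂ) - (‖a‖ : ℂ)) * u + (a - b) := by
    linear_combination (-1 : ℂ) * ha + hb
  have h1 : ‖(‖b‖ : ℂ) * (u - v)‖ = ‖b‖ * ‖u - v‖ := by
    rw [norm_mul, Complex.norm_real, norm_norm]
  have h2 : ‖((‖b‖ : ℂ) - (‖a‖ : ℂ)) * u‖ ≤ ‖a - b‖ := by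
    rw [norm_mul, hu, mul_one, ← Complex.ofReal_sub, Complex.norm_real, Real.norm_eq_abs,
      norm_sub_rev a b]
    exact abs_norm_sub_norm_le b a
  rw [← h1, e]
  linarith [norm_add_le (((‖b‖ : ℂ) - (‖a‖ : ℂ)) * u) (a - b)]

theorem stmt17 {n : ℕ} (hn : 1 ≤ n)
    (zstar : Fin n → ℂ) (hzstar : ∀ j, ‖zstar j‖ = 1)
    (σ : ℝ) (hσ : 0 < σ) (W : Matrix (Fin n) (Fin n) ℂ) (hW : W.IsHermitian)
    (Y : Matrix (Fin n) (Fin n) ℂ)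
    (hY : Y = Matrix.vecMulVec zstar (star zstar) + (σ : ℂ) • W)
    (zhat : Fin n → ℂ) (hzhat1 : ∀ j, ‖zhat j‖ = 1) (hzhat2 : zhat = F1 Y zhat)
    (t : ℝ) (ht : 0 < t) (ht2 : 4 * σ * opNorm W ≤ t)
    (z : Fin n → ℂ) (hz1 : ∀ i, ‖z i‖ ≤ 1)
    (hz2 : z = G zstar σ W z (dotProduct (star zstar) zhat) t) :
    enorm (zhat - z) ^ 2 ≤
      32 * ∑ j : Fin n, ind (‖zstar j * dotProduct (star zstar) zhat +
        (σ : ℂ) * W.mulVec z j‖ < t) := by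
  set s := dotProduct (star zstar) zhat with hs
  have hYz : ∀ j, Y.mulVec zhat j = zstar j * s + (σ : ℂ) * W.mulVec zhat j := by
    intro j
    rw [hY, Matrix.add_mulVec, Matrix.smul_mulVec, Matrix.vecMulVec_mulVec]
    simp [hs, mul_comm]
  have key : ∀ j, t ^ 2 * ‖(zhat - z) j‖ ^ 2 ≤
      4 * t ^ 2 * ind (‖zstar j * s + (σ : ℂ) * W.mulVec z j‖ < t)
        + 4 * σ ^ 2 * ‖W.mulVec (zhat - z) j‖ ^ 2 := by
    intro j
    set b := zstar j * s + (σ : ℂ) * W.mulVec z j with hb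
    by_cases h : ‖b‖ < t
    · have h1 : ‖(zhat - z) j‖ ≤ 2 := by
        have := norm_sub_le (zhat j) (z j)
        have := hz1 j
        have := hzhat1 j
        simp only [Pi.sub_apply]
        linarith
      have h2 : ‖(zhat - z) j‖ ^ 2 ≤ 4 := by nlinarith [norm_nonneg ((zhat - z) j)]
      have h3 : 0 ≤ 4 * σ ^ 2 * ‖W.mulVec (zhat - z) j‖ ^ 2 := by positivity
      rw [ind, if_pos h]
      nlinarith [sq_nonneg t]
    · rw [ind, if_neg h]
      push Not at h
      set a := Y.mulVec zhat j with ha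
      have hbpos : 0 < ‖b‖ := lt_of_lt_of_le ht h
      have hzj : z j = b / (‖b‖ : ℂ) := by
        have := congrFun hz2 j
        rw [this]
        simp only [G, gfun]
        rw [← hb, max_eq_left h]
      have e1 : b = (‖b‖ : ℂ) * z j := by
        rw [hzj, mul_div_cancel₀]
        exact_mod_cast hbpos.ne'
      have e2 : a = (‖a‖ : ℂ) * zhat j := by
        by_cases h0 : a = 0
        · simp [h0]
        · have := congrFun hzhat2 j
          simp only [F1] at this
          rw [← ha, if_pos h0] at this
          rw [this, mul_div_cancel₀]
          exact_mod_cast (norm_pos_iff.mpr h0).ne'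
      have h1 := unit_diff (zhat j) (z j) a b (hzhat1 j) e2 e1
      have h2 : a - b = (σ : ℂ) * W.mulVec (zhat - z) j := by
        rw [ha, hYz j, hb, Matrix.mulVec_sub, Pi.sub_apply]
        ring
      rw [h2, norm_mul, Complex.norm_real, Real.norm_eq_abs, abs_of_pos hσ] at h1
      have h3 : t * ‖(zhat - z) j‖ ≤ 2 * (σ * ‖W.mulVec (zhat - z) j‖) :=
        le_trans (mul_le_mul_of_nonneg_right h (norm_nonneg _)) h1
      have h4 := pow_le_pow_left₀ (by positivity) h3 2
      linarith [h4, mul_pow t ‖(zhat - z) j‖ 2]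
  have hsum := Finset.sum_le_sum (fun j (_ : j ∈ Finset.univ) => key j)
  rw [Finset.sum_add_distrib, ← Finset.mul_sum, ← Finset.mul_sum, ← Finset.mul_sum] at hsum
  have hW2 := mulVec_bound W (zhat - z)
  rw [enorm_sq]
  set D := ∑ i, ‖(zhat - z) i‖ ^ 2
  set N := ∑ j : Fin n, ind (‖zstar j * s + (σ : ℂ) * W.mulVec z j‖ < t) with hN
  have hD : 0 ≤ D := Finset.sum_nonneg fun i _ => sq_nonneg _
  have hN0 : 0 ≤ N := Finset.sum_nonneg fun i _ => by unfold ind; split_ifs <;> norm_num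
  have hop : 0 ≤ opNorm W := norm_nonneg _
  have ht3 : 16 * (σ ^ 2 * opNorm W ^ 2) ≤ t ^ 2 := by
    have := pow_le_pow_left₀ (by positivity) ht2 2
    linarith [this, mul_pow (4 * σ) (opNorm W) 2, mul_pow 4 σ 2]
  have h5 : 4 * σ ^ 2 * ∑ i, ‖W.mulVec (zhat - z) i‖ ^ 2 ≤ 4 * σ ^ 2 * (opNorm W ^ 2 * D) :=
    mul_le_mul_of_nonneg_left hW2 (by positivity)
  have h6 := mul_le_mul_of_nonneg_right ht3 hD
  have h7 : t ^ 2 * (3 * D) ≤ t ^ 2 * (16 * N) := by linarith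
  have h8 := le_of_mul_le_mul_left h7 (by positivity)
  linarith

end PhaseSync
end
end
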